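/- Suppose the matrix A has at least three real eigenvalues μ_{j₁}, μ_{j₂}, μ_{j₃}, each of odd algebraic multiplicity, such that d ≠ 0, where d = min over all triples (i₁,i₂,i₃) of indices of real eigenvalues of A of diam({μ_{j₁} + μ_{i₁}, μ_{j₂} + μ_{i₂}, μ_{j₃} + μ_{i₃}}), and diam(E) = sup_{x,y ∈ E} |x − y|. Then there exists a real number H such that [H, ∞) ⊆ σ(L(Q)). -/

import Mathlib

open MeasureTheory Set Filter Topology Metric

open scoped Classical

noncomputable section

/-- The Bloch phase factor `e^{iπt}`. -/
def blochPhase (t : ℝ) : ℂ := Complex.exp (Complex.I * Real.pi * t)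

/-- `Ψ` is a Bloch function of `L_t(Q)` with Bloch eigenvalue `lam`:
nonzero, twice continuously differentiable, satisfies `-Ψ'' + QΨ = lam Ψ`
and `Ψ(x+π) = e^{iπt} Ψ(x)`. -/
def IsBlochPair {m : ℕ} (Q : ℝ → Matrix (Fin m) (Fin m) ℂ) (t : ℝ) (lam : ℂ)
    (Ψ : ℝ → Fin m → ℂ) : Prop :=
  Ψ ≠ 0 ∧ ContDiff ℝ 2 Ψ ∧
    (∀ x : ℝ, -(deriv (deriv Ψ) x) + (Q x).mulVec (Ψ x) = lam • Ψ x) ∧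
    (∀ x : ℝ, Ψ (x + Real.pi) = blochPhase t • Ψ x)

/-- `lam` is a Bloch eigenvalue of `L_t(Q)`. -/
def IsBlochEigenvalue {m : ℕ} (Q : ℝ → Matrix (Fin m) (Fin m) ℂ) (t : ℝ) (lam : ℂ) : Prop :=
  ∃ Ψ, IsBlochPair Q t lam Ψ

/-- `Ψ` is normalized: `∫₀^π |Ψ(x)|² dx = 1` (Euclidean norm on `ℂ^m`). -/
def IsNormalized {m : ℕ} (Ψ : ℝ → Fin m → ℂ) : Prop :=
  (∫ x in (0:ℝ)..Real.pi, ∑ i, ‖Ψ x i‖ ^ 2) = 1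

/-- The index set `A(k,t)`. -/
def Akt (k : ℤ) (t : ℝ) : Set ℤ :=
  if t ∈ Set.Ioo (-(2:ℝ)/3) (-(1:ℝ)/3) ∪ Set.Ioo ((1:ℝ)/3) ((2:ℝ)/3) then {k}
  else if t ∈ Set.Ioo (-(1:ℝ)/3) ((1:ℝ)/3) then {k, -k}
  else if t ∈ Set.Ioc ((2:ℝ)/3) 1 then {k, -k - 1}
  else if t ∈ Set.Ioo (-1 : ℝ) (-(2:ℝ)/3) then {k, -k + 1}
  else ∅

/-- The spectrum of `L(Q)`: the set of Bloch eigenvalues of `L_t(Q)` for some `t ∈ (-1,1]`. -/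
def SpecLQ {m : ℕ} (Q : ℝ → Matrix (Fin m) (Fin m) ℂ) : Set ℂ :=
  {lam | ∃ t ∈ Set.Ioc (-1:ℝ) 1, IsBlochEigenvalue Q t lam}

/-- The mean matrix `A = ∫₀^π Q(x) dx`. -/
def meanMatrix {m : ℕ} (Q : ℝ → Matrix (Fin m) (Fin m) ℂ) : Matrix (Fin m) (Fin m) ℂ :=
  Matrix.of fun i j => ∫ x in (0:ℝ)..Real.pi, Q x i j

/-!
Fix a frequency `ρ`. In the amplitudes of the waves `e^{± iρx}` the equation `-Ψ'' + QΨ = ρ²Ψ` is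
a rotating system with a drift of size `1 / ρ`, and `ρ²` lies in the spectrum iff the propagator
`Y` over one period has an eigenvalue `e^{2iφ}` of modulus one. PT-symmetry gives `Ȳ Y = 1`, which
makes the normalized determinant `φ ↦ det (e^{-iφ} Y - e^{iφ})` real up to a constant factor. If
`ρ²` is in a gap, this determinant has no zero, hence constant sign.

Suppose there are gaps at arbitrarily large `ρ`. Averaging shows that `2iρ (e^{∓iρπ} Y - 1)` tends
to `diag(A, -A)`, so the determinant at `φ = ρπ / 2 - s / 4ρ` depends asymptotically only on
`s` and on the resonance parameter `w = 2iρ (1 - e^{2iρπ})`. Along an ultrafilter of gaps, either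
`w` tends to infinity and the rescaled determinant tends to `P(s)`, the characteristic polynomial
of `A`, or `w` has a limit, which is real because `Im w = |w|² / 4ρ`, and the determinant tends to
`P(s) P(w - s)`. Neither function may change sign on the real line. In the first case all real roots
of `P` have even multiplicity; in the second the multiplicities of `μ` and `w - μ` as roots of `P`
have an even sum for all real `μ`, so if `μ₁, μ₂, μ₃` have odd multiplicity, then `w - μ₁`,
`w - μ₂`, `w - μ₃` are roots as well, and the three sums `μⱼ + (w - μⱼ)` coincide.
-/

section GlobalExistence

variable {E : Type*} [NormedAddCommGroup E] [NormedSpace ℝ E]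

theorem norm_integral_le_of_norm_le_exp_of_nonneg {f : ℝ → E} {c L : ℝ} (hL : 0 < L)
    (hf : ∀ t, ‖f t‖ ≤ c * Real.exp (L * |t|)) {x : ℝ} (hx : 0 ≤ x) :
    ‖∫ t in (0 : ℝ)..x, f t‖ ≤ c / L * Real.exp (L * x) := by
  have hc : 0 ≤ c := by simpa using (norm_nonneg _).trans (hf 0)
  have hbound : ‖∫ t in (0 : ℝ)..x, f t‖ ≤ ∫ t in (0 : ℝ)..x, c * Real.exp (L * t) := by
    have hcont : Continuous fun t : ℝ => c * Real.exp (L * t) := by fun_prop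
    refine intervalIntegral.norm_integral_le_of_norm_le hx (.of_forall fun t ht => ?_)
      (hcont.intervalIntegrable 0 x)
    simpa [abs_of_pos ht.1] using hf t
  calc ‖∫ t in (0 : ℝ)..x, f t‖
      ≤ ∫ t in (0 : ℝ)..x, c * Real.exp (L * t) := hbound
    _ = c / L * (Real.exp (L * x) - 1) := by
        simp [intervalIntegral.integral_comp_mul_left _ hL.ne', div_eq_mul_inv, mul_assoc]
    _ ≤ c / L * Real.exp (L * x) := by gcongr; linarith

theorem norm_integral_le_of_norm_le_exp {f : ℝ → E} {c L : ℝ} (hL : 0 < L)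
    (hf : ∀ t, ‖f t‖ ≤ c * Real.exp (L * |t|)) (x : ℝ) :
    ‖∫ t in (0 : ℝ)..x, f t‖ ≤ c / L * Real.exp (L * |x|) := by
  rcases le_total 0 x with hx | hx
  · simpa [abs_of_nonneg hx] using norm_integral_le_of_norm_le_exp_of_nonneg hL hf hx
  · have hreflect : ∫ t in (0 : ℝ)..x, f t = -∫ t in (0 : ℝ)..-x, f (-t) := by
      simp [intervalIntegral.integral_symm x 0]
    rw [hreflect, norm_neg, abs_of_nonpos hx]
    exact norm_integral_le_of_norm_le_exp_of_nonneg hL (fun t => by simpa using hf (-t))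
      (neg_nonneg.2 hx)

variable {f : ℝ → E → E} {K : NNReal} {y₀ : E} {c : ℝ}

/-- The exponential weight `e^{L|x|}` with `L = 2K + 1`, which makes the Picard operator of a
field with Lipschitz constant `K` a contraction on all of `ℝ`. -/
def picardWeight (K : NNReal) (x : ℝ) : ℝ := Real.exp ((2 * K + 1) * |x|)

theorem continuous_picardWeight : Continuous (picardWeight K) := by
  unfold picardWeight; fun_prop

theorem picardWeight_pos (x : ℝ) : 0 < picardWeight K x := Real.exp_pos _

theorem one_le_picardWeight (x : ℝ) : 1 ≤ picardWeight K x :=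
  Real.one_le_exp (by positivity)

theorem norm_inv_picardWeight_smul_integral_le {g : ℝ → E} {b : ℝ}
    (hg : ∀ t, ‖g t‖ ≤ b * picardWeight K t) (x : ℝ) :
    ‖(picardWeight K x)⁻¹ • ∫ t in (0 : ℝ)..x, g t‖ ≤ b / (2 * K + 1) := by
  have hint : ‖∫ t in (0 : ℝ)..x, g t‖ ≤ b / (2 * K + 1) * picardWeight K x :=
    norm_integral_le_of_norm_le_exp (by positivity) hg x
  rw [norm_smul, norm_inv, Real.norm_of_nonneg (picardWeight_pos x).le,
    inv_mul_le_iff₀ (picardWeight_pos x), mul_comm]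
  exact hint

theorem continuous_picardIntegrand (hf : Continuous ↿f) (u : BoundedContinuousFunction ℝ E) :
    Continuous fun t => f t (y₀ + picardWeight K t • u t) :=
  hf.comp (continuous_id.prodMk
    (continuous_const.add (continuous_picardWeight.smul u.continuous)))

theorem norm_picardIntegrand_le (hlip : ∀ t, LipschitzWith K (f t)) (hbound : ∀ t, ‖f t y₀‖ ≤ c)
    (u : BoundedContinuousFunction ℝ E) (t : ℝ) :
    ‖f t (y₀ + picardWeight K t • u t)‖ ≤ (c + K * ‖u‖) * picardWeight K t := by
  have hw := one_le_picardWeight (K := K) t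
  have hc : 0 ≤ c := (norm_nonneg _).trans (hbound 0)
  have hu : ‖picardWeight K t • u t‖ ≤ picardWeight K t * ‖u‖ := by
    rw [norm_smul, Real.norm_of_nonneg (picardWeight_pos t).le]
    gcongr
    exact u.norm_coe_le_norm t
  calc ‖f t (y₀ + picardWeight K t • u t)‖
      ≤ ‖f t y₀‖ + ‖f t (y₀ + picardWeight K t • u t) - f t y₀‖ := norm_le_norm_add_norm_sub' _ _
    _ ≤ c + K * ‖picardWeight K t • u t‖ := by
        gcongr
        · exact hbound t
        · simpa using (hlip t).norm_sub_le (y₀ + picardWeight K t • u t) y₀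
    _ ≤ c * picardWeight K t + K * (picardWeight K t * ‖u‖) := by
        gcongr
        exact le_mul_of_one_le_right hc hw
    _ = (c + K * ‖u‖) * picardWeight K t := by ring

/-- The Picard operator of `y' = f x y`, `y 0 = y₀`, conjugated by the substitution
`y = y₀ + picardWeight K • u`, so that it acts on bounded continuous functions. -/
def weightedPicard (hf : Continuous ↿f) (hlip : ∀ t, LipschitzWith K (f t))
    (hbound : ∀ t, ‖f t y₀‖ ≤ c) (u : BoundedContinuousFunction ℝ E) :
    BoundedContinuousFunction ℝ E :=
  .ofNormedAddCommGroup
    (fun x => (picardWeight K x)⁻¹ • ∫ t in (0 : ℝ)..x, f t (y₀ + picardWeight K t • u t))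
    ((continuous_picardWeight.inv₀ fun x => (picardWeight_pos x).ne').smul
      (intervalIntegral.continuous_primitive
        (fun _ _ => (continuous_picardIntegrand hf u).intervalIntegrable _ _) 0))
    _ (norm_inv_picardWeight_smul_integral_le (norm_picardIntegrand_le hlip hbound u))

theorem contractingWith_weightedPicard (hf : Continuous ↿f) (hlip : ∀ t, LipschitzWith K (f t))
    (hbound : ∀ t, ‖f t y₀‖ ≤ c) : ContractingWith (1 / 2) (weightedPicard hf hlip hbound) := by
  refine ⟨by norm_num, LipschitzWith.of_dist_le_mul fun u v => ?_⟩
  refine (BoundedContinuousFunction.dist_le (by positivity)).2 fun x => ?_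
  have hint (w : BoundedContinuousFunction ℝ E) :=
    (continuous_picardIntegrand (K := K) (y₀ := y₀) hf w).intervalIntegrable (μ := volume) 0 x
  have hdiff (t : ℝ) : ‖f t (y₀ + picardWeight K t • u t) - f t (y₀ + picardWeight K t • v t)‖
      ≤ K * dist u v * picardWeight K t := by
    refine ((hlip t).norm_sub_le _ _).trans ?_
    rw [add_sub_add_left_eq_sub, ← smul_sub, norm_smul,
      Real.norm_of_nonneg (picardWeight_pos t).le, ← dist_eq_norm, mul_assoc,
      mul_comm (dist u v)]
    gcongr
    · exact (picardWeight_pos t).le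
    · exact BoundedContinuousFunction.dist_coe_le_dist t
  calc dist (weightedPicard hf hlip hbound u x) (weightedPicard hf hlip hbound v x)
      = ‖(picardWeight K x)⁻¹ • ∫ t in (0 : ℝ)..x,
          (f t (y₀ + picardWeight K t • u t) - f t (y₀ + picardWeight K t • v t))‖ := by
        rw [intervalIntegral.integral_sub (hint u) (hint v), smul_sub, ← dist_eq_norm]
        rfl
    _ ≤ K * dist u v / (2 * K + 1) := norm_inv_picardWeight_smul_integral_le hdiff x
    _ ≤ (1 / 2 : NNReal) * dist u v := by
        rw [div_le_iff₀ (by positivity)]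
        push_cast
        linarith [dist_nonneg (x := u) (y := v)]

theorem exists_forall_hasDerivAt_of_lipschitzWith [CompleteSpace E] (hf : Continuous ↿f)
    (hlip : ∀ t, LipschitzWith K (f t)) (hbound : ∀ t, ‖f t y₀‖ ≤ c) :
    ∃ y : ℝ → E, y 0 = y₀ ∧ ∀ x, HasDerivAt y (f x (y x)) x := by
  have hT := contractingWith_weightedPicard hf hlip hbound
  set u := hT.fixedPoint with hu
  have hfixed (x : ℝ) : picardWeight K x • u x =
      ∫ t in (0 : ℝ)..x, f t (y₀ + picardWeight K t • u t) := by
    conv_lhs => rw [hu, ← hT.fixedPoint_isFixedPt]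
    exact smul_inv_smul₀ (picardWeight_pos x).ne' _
  refine ⟨fun x => y₀ + picardWeight K x • u x, ?_, fun x => ?_⟩
  · beta_reduce
    rw [hfixed, intervalIntegral.integral_same, add_zero]
  have hcont := continuous_picardIntegrand (K := K) (y₀ := y₀) hf u
  have hderiv := intervalIntegral.integral_hasDerivAt_right (hcont.intervalIntegrable 0 x)
    hcont.aestronglyMeasurable.stronglyMeasurableAtFilter hcont.continuousAt
  exact (hderiv.congr_of_eventuallyEq (.of_forall hfixed)).const_add y₀

end GlobalExistence

section FundamentalSolution

variable {𝔸 : Type*} [NormedRing 𝔸] {K : NNReal}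

theorem lipschitzWith_mul_left_of_norm_le {b : 𝔸} (hb : ‖b‖ ≤ K) : LipschitzWith K (b * ·) :=
  LipschitzWith.of_dist_le_mul fun y z => by
    rw [dist_eq_norm, dist_eq_norm, ← mul_sub]
    exact (norm_mul_le _ _).trans (by gcongr)

variable [NormedAlgebra ℝ 𝔸] {B Y Z : ℝ → 𝔸}

/-- `Y` is the fundamental solution of the linear equation `y' = B y`, normalized at the origin. -/
structure IsFundamentalSolution (B Y : ℝ → 𝔸) : Prop where
  map_zero : Y 0 = 1
  hasDerivAt : ∀ x, HasDerivAt Y (B x * Y x) x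

theorem eq_of_hasDerivAt_mul (hB : ∀ x, ‖B x‖ ≤ K) (hY : ∀ x, HasDerivAt Y (B x * Y x) x)
    (hZ : ∀ x, HasDerivAt Z (B x * Z x) x) (h₀ : Y 0 = Z 0) : Y = Z :=
  ODE_solution_unique_univ (v := fun x y => B x * y) (s := fun _ => univ)
    (fun x => (lipschitzWith_mul_left_of_norm_le (hB x)).lipschitzOnWith)
    (fun x => ⟨hY x, trivial⟩) (fun x => ⟨hZ x, trivial⟩) h₀

theorem exists_isFundamentalSolution [CompleteSpace 𝔸] (hcont : Continuous B)
    (hB : ∀ x, ‖B x‖ ≤ K) : ∃ Y, IsFundamentalSolution B Y := by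
  obtain ⟨Y, hY₀, hY⟩ := exists_forall_hasDerivAt_of_lipschitzWith (f := fun x y => B x * y)
    (y₀ := 1) (c := K) ((hcont.comp continuous_fst).mul continuous_snd)
    (fun x => lipschitzWith_mul_left_of_norm_le (hB x)) (fun x => by simpa using hB x)
  exact ⟨Y, hY₀, hY⟩

namespace IsFundamentalSolution

theorem continuous (hY : IsFundamentalSolution B Y) : Continuous Y :=
  continuous_iff_continuousAt.2 fun x => (hY.hasDerivAt x).continuousAt

theorem unique (hB : ∀ x, ‖B x‖ ≤ K) (hY : IsFundamentalSolution B Y)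
    (hZ : IsFundamentalSolution B Z) : Y = Z :=
  eq_of_hasDerivAt_mul hB hY.hasDerivAt hZ.hasDerivAt (hY.map_zero.trans hZ.map_zero.symm)

theorem map_add_period (hB : ∀ x, ‖B x‖ ≤ K) {T : ℝ} (hper : Function.Periodic B T)
    (hY : IsFundamentalSolution B Y) (x : ℝ) : Y (x + T) = Y x * Y T := by
  have hshift (x : ℝ) : HasDerivAt (fun x => Y (x + T)) (B x * Y (x + T)) x := by
    simpa only [hper x] using (hY.hasDerivAt (x + T)).comp_add_const x T
  have hmul (x : ℝ) : HasDerivAt (fun x => Y x * Y T) (B x * (Y x * Y T)) x := by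
    simpa only [mul_assoc] using (hY.hasDerivAt x).mul_const (Y T)
  exact congrFun (eq_of_hasDerivAt_mul hB hshift hmul (by simp [hY.map_zero])) x

theorem comp_neg (σ : 𝔸 →A[ℝ] 𝔸) (hsymm : ∀ x, -σ (B (-x)) = B x)
    (hY : IsFundamentalSolution B Y) : IsFundamentalSolution B fun x => σ (Y (-x)) where
  map_zero := by simp [hY.map_zero]
  hasDerivAt x := by
    have hneg : HasDerivAt (fun x => Y (-x)) (-(B (-x) * Y (-x))) x := by
      simpa [Function.comp_def] using (hY.hasDerivAt (-x)).scomp x (hasDerivAt_neg x)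
    have hmap := (σ.toContinuousLinearMap.hasFDerivAt (x := Y (-x))).comp_hasDerivAt x hneg
    refine hmap.congr_deriv ?_
    rw [← hsymm x]
    simp

theorem map_period_mul_self (hB : ∀ x, ‖B x‖ ≤ K) {T : ℝ} (hper : Function.Periodic B T)
    (σ : 𝔸 →A[ℝ] 𝔸) (hsymm : ∀ x, -σ (B (-x)) = B x) (hY : IsFundamentalSolution B Y) :
    σ (Y T) * Y T = 1 := by
  have hreflect : σ (Y T) = Y (-T) := by
    simpa using congrFun (unique hB (hY.comp_neg σ hsymm) hY) (-T)
  rw [hreflect, ← hY.map_add_period hB hper, neg_add_cancel, hY.map_zero]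

theorem norm_sub_one_le {b : ℝ} (hB : ∀ x, ‖B x‖ ≤ b) (hY : IsFundamentalSolution B Y) {x : ℝ}
    (hx : 0 ≤ x) : ‖Y x - 1‖ ≤ ‖(1 : 𝔸)‖ * (Real.exp (b * x) - 1) := by
  have hderiv (t : ℝ) : HasDerivAt (fun t => Y t - 1) (B t * Y t) t := (hY.hasDerivAt t).sub_const 1
  have hgrowth (t : ℝ) : ‖B t * Y t‖ ≤ b * ‖Y t - 1‖ + b * ‖(1 : 𝔸)‖ :=
    calc ‖B t * Y t‖ ≤ ‖B t‖ * ‖Y t - 1 + 1‖ := by simpa using norm_mul_le (B t) (Y t)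
      _ ≤ b * (‖Y t - 1‖ + ‖(1 : 𝔸)‖) :=
        mul_le_mul (hB t) (norm_add_le _ _) (norm_nonneg _) ((norm_nonneg _).trans (hB t))
      _ = b * ‖Y t - 1‖ + b * ‖(1 : 𝔸)‖ := mul_add _ _ _
  have hbound := norm_le_gronwallBound_of_norm_deriv_right_le (δ := 0) (a := 0) (b := x)
    (fun t _ => (hderiv t).continuousAt.continuousWithinAt)
    (fun t _ => (hderiv t).hasDerivWithinAt) (by simp [hY.map_zero])
    (fun t _ => hgrowth t) x ⟨hx, le_rfl⟩
  refine hbound.trans_eq ?_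
  rcases eq_or_ne b 0 with rfl | hb
  · simp [gronwallBound_K0]
  · simp [gronwallBound_of_K_ne_0 hb, mul_div_cancel_left₀ _ hb]

theorem sub_one_eq_integral [CompleteSpace 𝔸] (hcont : Continuous B)
    (hY : IsFundamentalSolution B Y) (x : ℝ) :
    Y x - 1 = (∫ t in (0 : ℝ)..x, B t) + ∫ t in (0 : ℝ)..x, B t * (Y t - 1) := by
  have hint : IntervalIntegrable (fun t => B t * (Y t - 1)) volume 0 x :=
    (hcont.mul (hY.continuous.sub continuous_const)).intervalIntegrable 0 x
  rw [← intervalIntegral.integral_add (hcont.intervalIntegrable 0 x) hint, ← hY.map_zero,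
    ← intervalIntegral.integral_eq_sub_of_hasDerivAt (fun t _ => hY.hasDerivAt t)
      ((hcont.mul hY.continuous).intervalIntegrable 0 x)]
  simp [mul_sub, hY.map_zero]

theorem tendsto_inv_smul_sub_one [CompleteSpace 𝔸] {ι : Type*} {l : Filter ι} {ε : ι → ℝ}
    {G C : ι → ℝ → 𝔸} {T M : ℝ} {A : 𝔸} (hT : 0 ≤ T) (hε : Tendsto ε l (𝓝[≠] 0))
    (hG : ∀ i, Continuous (G i)) (hM : ∀ i x, ‖G i x‖ ≤ M)
    (hA : Tendsto (fun i => ∫ x in (0 : ℝ)..T, G i x) l (𝓝 A))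
    (hC : ∀ i, IsFundamentalSolution (fun x => ε i • G i x) (C i)) :
    Tendsto (fun i => (ε i)⁻¹ • (C i T - 1)) l (𝓝 A) := by
  have hε₀ : Tendsto ε l (𝓝 0) := hε.mono_right nhdsWithin_le_nhds
  have hclose (i : ι) {x : ℝ} (hx : x ∈ Ioc 0 T) :
      ‖C i x - 1‖ ≤ ‖(1 : 𝔸)‖ * (Real.exp (|ε i| * M * T) - 1) := by
    have hM₀ : 0 ≤ M := (norm_nonneg _).trans (hM i 0)
    refine ((hC i).norm_sub_one_le (b := |ε i| * M) (fun t => ?_) hx.1.le).trans ?_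
    · rw [norm_smul, Real.norm_eq_abs]
      gcongr
      exact hM i t
    · gcongr
      exact hx.2
  have hremainder : Tendsto (fun i => ∫ x in (0 : ℝ)..T, G i x * (C i x - 1)) l (𝓝 0) := by
    have hlim : Tendsto (fun i => M * (‖(1 : 𝔸)‖ * (Real.exp (|ε i| * M * T) - 1)) * |T - 0|)
        l (𝓝 0) := by
      have hcont : Continuous fun e : ℝ =>
          M * (‖(1 : 𝔸)‖ * (Real.exp (|e| * M * T) - 1)) * |T - 0| := by fun_prop
      simpa [Function.comp_def] using (hcont.tendsto 0).comp hε₀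
    refine squeeze_zero_norm (fun i => ?_) hlim
    refine intervalIntegral.norm_integral_le_of_norm_le_const fun x hx => ?_
    rw [uIoc_of_le hT] at hx
    exact (norm_mul_le _ _).trans
      (mul_le_mul (hM i x) (hclose i hx) (norm_nonneg _) ((norm_nonneg _).trans (hM i x)))
  have hsum := hA.add hremainder
  rw [add_zero] at hsum
  refine hsum.congr' ?_
  filter_upwards [hε.eventually self_mem_nhdsWithin] with i hi
  rw [(hC i).sub_one_eq_integral ((hG i).const_smul (ε i))]
  simp only [Pi.smul_apply, smul_mul_assoc, intervalIntegral.integral_smul, ← smul_add,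
    inv_smul_smul₀ hi]

end IsFundamentalSolution

end FundamentalSolution

section Averaging

theorem tendsto_integral_cexp_mul_I_smul_cocompact {E : Type*} [NormedAddCommGroup E]
    [NormedSpace ℂ E] (g : ℝ → E) (a b : ℝ) :
    Tendsto (fun ω : ℝ => ∫ x in a..b, Complex.exp ((ω * x : ℝ) * Complex.I) • g x)
      (cocompact ℝ) (𝓝 0) := by
  have hscale : Tendsto (fun ω : ℝ => -(2 * Real.pi)⁻¹ * ω) (cocompact ℝ) (cocompact ℝ) :=
    tendsto_cocompact_mul_left₀ (by simp [Real.pi_ne_zero])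
  have hrl := ((Real.tendsto_integral_exp_smul_cocompact ((uIoc a b).indicator g)).comp
    hscale).const_smul (if a ≤ b then (1 : ℝ) else -1)
  rw [smul_zero] at hrl
  refine hrl.congr fun ω => ?_
  rw [intervalIntegral.intervalIntegral_eq_integral_uIoc, ← integral_indicator measurableSet_uIoc]
  refine congrArg _ (integral_congr_ae (.of_forall fun x => ?_))
  have hphase : 2 * Real.pi * -(x * (-(2 * Real.pi)⁻¹ * ω)) = ω * x := by
    field_simp [Real.pi_ne_zero]
  simp only [Circle.smul_def, Real.fourierChar_apply, hphase]
  exact (indicator_smul_apply _ (fun x : ℝ => Complex.exp ((ω * x : ℝ) * Complex.I)) g x).symm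

variable {𝔸 : Type*} [NormedRing 𝔸]

/-- The part of `a` that preserves the range and the kernel of the idempotent `p`. -/
def pinching (p a : 𝔸) : 𝔸 := p * a * p + (1 - p) * a * (1 - p)

theorem continuous_pinching (p : 𝔸) : Continuous (pinching p) := by
  unfold pinching; fun_prop

variable [NormedAlgebra ℂ 𝔸]

/-- For an idempotent `p`, the one-parameter group `y ↦ exp (iy(2p - 1))`: rotation by `e^{iy}`
on the range of `p` and by `e^{-iy}` on its kernel. -/
def phaseRotation (p : 𝔸) (y : ℝ) : 𝔸 :=
  Complex.exp (y * Complex.I) • p + Complex.exp (-(y * Complex.I)) • (1 - p)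

@[simp]
theorem phaseRotation_zero (p : 𝔸) : phaseRotation p 0 = 1 := by simp [phaseRotation]

theorem norm_phaseRotation_le (p : 𝔸) (y : ℝ) : ‖phaseRotation p y‖ ≤ ‖p‖ + ‖1 - p‖ := by
  refine (norm_add_le _ _).trans_eq ?_
  rw [norm_smul, norm_smul, ← neg_mul, ← Complex.ofReal_neg, Complex.norm_exp_ofReal_mul_I,
    Complex.norm_exp_ofReal_mul_I, one_mul, one_mul]

theorem continuous_phaseRotation (p : 𝔸) : Continuous (phaseRotation p) := by
  unfold phaseRotation; fun_prop

variable {p : 𝔸}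

theorem phaseRotation_mul (hp : IsIdempotentElem p) (y z : ℝ) :
    phaseRotation p y * phaseRotation p z = phaseRotation p (y + z) := by
  simp only [phaseRotation, add_mul, mul_add, smul_mul_smul_comm, hp.eq, hp.one_sub.eq,
    hp.mul_one_sub_self, hp.one_sub_mul_self, smul_zero, add_zero, zero_add, ← Complex.exp_add]
  congr 3 <;> push_cast <;> ring

theorem phaseRotation_neg_mul_mul (a : 𝔸) (y : ℝ) :
    phaseRotation p (-y) * a * phaseRotation p y = pinching p a +
      (Complex.exp ((-2 * y : ℝ) * Complex.I) • (p * a * (1 - p)) +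
        Complex.exp ((2 * y : ℝ) * Complex.I) • ((1 - p) * a * p)) := by
  simp only [phaseRotation, pinching, add_mul, mul_add, smul_mul_assoc, mul_smul_comm, smul_add,
    smul_smul, ← Complex.exp_add, Complex.ofReal_neg, neg_mul, neg_neg, neg_add_cancel,
    add_neg_cancel, Complex.exp_zero, one_smul]
  rw [show -(y * Complex.I) + -(y * Complex.I) = -(((2 * y : ℝ) : ℂ) * Complex.I) by
      push_cast; ring,
    show y * Complex.I + y * Complex.I = ((2 * y : ℝ) : ℂ) * Complex.I by push_cast; ring]
  abel

theorem hasDerivAt_phaseRotation (hp : IsIdempotentElem p) (ρ x : ℝ) :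
    HasDerivAt (fun x => phaseRotation p (ρ * x))
      (phaseRotation p (ρ * x) * ((ρ * Complex.I) • (p - (1 - p)))) x := by
  have hphase : HasDerivAt (fun x : ℝ => ((ρ * x : ℝ) : ℂ) * Complex.I) (ρ * Complex.I) x := by
    simpa using ((((hasDerivAt_id x).const_mul ρ).ofReal_comp).mul_const Complex.I)
  refine ((hphase.cexp.smul_const p).add (hphase.neg.cexp.smul_const (1 - p))).congr_deriv ?_
  simp only [phaseRotation, add_mul, mul_sub, smul_mul_smul_comm, hp.eq, hp.one_sub.eq,
    hp.mul_one_sub_self, hp.one_sub_mul_self]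
  simp [← smul_neg]

/-- The components of `R x` outside the pinching carry the factors `e^{± 2iρx}`, so they average
out by the Riemann–Lebesgue lemma. -/
theorem tendsto_integral_phaseRotation_neg_mul_mul {R : ℝ → 𝔸} (hR : Continuous R)
    (p : 𝔸) (a b : ℝ) :
    Tendsto (fun ρ : ℝ => ∫ x in a..b, phaseRotation p (-(ρ * x)) * R x * phaseRotation p (ρ * x))
      atTop (𝓝 (∫ x in a..b, pinching p (R x))) := by
  have hoffdiag (k : ℝ) (hk : Tendsto (fun ρ : ℝ => k * ρ) atTop (cocompact ℝ)) (g : ℝ → 𝔸) :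
      Tendsto (fun ρ : ℝ => ∫ x in a..b, Complex.exp ((k * (ρ * x) : ℝ) * Complex.I) • g x)
        atTop (𝓝 0) := by
    simpa only [Function.comp_def, mul_assoc] using
      (tendsto_integral_cexp_mul_I_smul_cocompact g a b).comp hk
  have hneg := hoffdiag (-2) ((tendsto_id.const_mul_atTop_of_neg (by norm_num)).mono_right
    atBot_le_cocompact) fun x => p * R x * (1 - p)
  have hpos := hoffdiag 2 ((tendsto_id.const_mul_atTop (by norm_num)).mono_right
    atTop_le_cocompact) fun x => (1 - p) * R x * p
  have hlim := (hneg.add hpos).const_add (∫ x in a..b, pinching p (R x))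
  rw [add_zero, add_zero] at hlim
  refine hlim.congr fun ρ => ?_
  simp only [phaseRotation_neg_mul_mul]
  have hpinch := (continuous_pinching p).comp hR
  rw [intervalIntegral.integral_add, intervalIntegral.integral_add] <;>
    refine Continuous.intervalIntegrable ?_ _ _ <;> fun_prop

/-- The coefficient `iρ(2p - 1) + (2iρ)⁻¹ R(x)`: fast rotation with frequency `ρ` and a slow drift
of size `1 / ρ`. -/
def rotatingCoefficient (p : 𝔸) (R : ℝ → 𝔸) (ρ x : ℝ) : 𝔸 :=
  (ρ * Complex.I) • (p - (1 - p)) + (2 * (ρ * Complex.I))⁻¹ • R x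

theorem neg_map_rotatingCoefficient {F : Type*} [FunLike F 𝔸 𝔸] [RingHomClass F 𝔸 𝔸] {σ : F}
    {R : ℝ → 𝔸}
    (hσ : ∀ (c : ℂ) (a : 𝔸), σ (c • a) = starRingEnd ℂ c • σ a) (hp : σ p = p)
    (hR : ∀ x, σ (R (-x)) = R x) (ρ x : ℝ) :
    -σ (rotatingCoefficient p R ρ (-x)) = rotatingCoefficient p R ρ x := by
  have hconj : starRingEnd ℂ (2 * (ρ * Complex.I))⁻¹ = -(2 * (ρ * Complex.I))⁻¹ := by
    simp only [map_inv₀, map_mul, map_ofNat, Complex.conj_ofReal, Complex.conj_I, mul_neg, inv_neg]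
  simp only [rotatingCoefficient, map_add, hσ, hconj, map_mul, Complex.conj_ofReal, Complex.conj_I,
    map_sub, map_one, hp, hR, mul_neg, neg_smul, neg_add, neg_neg]

namespace IsFundamentalSolution

theorem phaseRotation_neg_mul (hp : IsIdempotentElem p) {R Y : ℝ → 𝔸} {ρ : ℝ}
    (hY : IsFundamentalSolution (rotatingCoefficient p R ρ) Y) :
    IsFundamentalSolution
      (fun x => (2 * ρ)⁻¹ •
        -Complex.I • (phaseRotation p (-(ρ * x)) * R x * phaseRotation p (ρ * x)))
      (fun x => phaseRotation p (-(ρ * x)) * Y x) where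
  map_zero := by simp [hY.map_zero]
  hasDerivAt x := by
    have hrot := hasDerivAt_phaseRotation hp (-ρ) x
    simp only [neg_mul, Complex.ofReal_neg] at hrot
    have hinv : phaseRotation p (ρ * x) * phaseRotation p (-(ρ * x)) = 1 := by
      rw [phaseRotation_mul hp, add_neg_cancel, phaseRotation_zero]
    have hsmall : (2 * (ρ * Complex.I))⁻¹ = ((2 * ρ : ℝ) : ℂ)⁻¹ * -Complex.I := by
      rw [← Complex.inv_I, ← mul_inv]; push_cast; ring
    refine (hrot.mul (hY.hasDerivAt x)).congr_deriv ?_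
    calc _ = (2 * (ρ * Complex.I))⁻¹ • (phaseRotation p (-(ρ * x)) * R x * 1 * Y x) := by
          simp only [rotatingCoefficient, add_mul, mul_add, neg_smul, mul_neg, neg_mul, mul_assoc,
            smul_mul_assoc, mul_smul_comm, one_mul, neg_add_cancel_left]
      _ = _ := by
          rw [← hinv, hsmall, mul_smul, ← Complex.ofReal_inv, Complex.coe_smul]
          simp only [smul_mul_assoc, mul_assoc]

theorem tendsto_smul_phaseRotation_mul_sub_one [CompleteSpace 𝔸] (hp : IsIdempotentElem p)
    {R : ℝ → 𝔸} (hR : Continuous R) {M : ℝ} (hM : ∀ x, ‖R x‖ ≤ M) {Y : ℝ → ℝ → 𝔸}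
    (hY : ∀ ρ, IsFundamentalSolution (rotatingCoefficient p R ρ) (Y ρ)) {T : ℝ} (hT : 0 ≤ T) :
    Tendsto (fun ρ : ℝ => (2 * (ρ * Complex.I)) • (phaseRotation p (-(ρ * T)) * Y ρ T - 1)) atTop
      (𝓝 (∫ x in (0 : ℝ)..T, pinching p (R x))) := by
  have hsmall : Tendsto (fun ρ : ℝ => (2 * ρ)⁻¹) atTop (𝓝[≠] 0) :=
    (tendsto_inv_atTop_nhdsGT_zero.comp
      (tendsto_id.const_mul_atTop two_pos)).mono_right (nhdsGT_le_nhdsNE 0)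
  have hcont (ρ : ℝ) : Continuous fun x =>
      -Complex.I • (phaseRotation p (-(ρ * x)) * R x * phaseRotation p (ρ * x)) := by
    have := continuous_phaseRotation p
    fun_prop
  have hbound (ρ x : ℝ) :
      ‖-Complex.I • (phaseRotation p (-(ρ * x)) * R x * phaseRotation p (ρ * x))‖ ≤
        (‖p‖ + ‖1 - p‖) * M * (‖p‖ + ‖1 - p‖) := by
    have hM₀ : 0 ≤ M := (norm_nonneg _).trans (hM 0)
    rw [norm_smul, norm_neg, Complex.norm_I, one_mul]
    refine norm_mul₃_le.trans ?_
    gcongr ?_ * ?_ * ?_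
    exacts [norm_phaseRotation_le p _, hM x, norm_phaseRotation_le p _]
  have hmean := (tendsto_integral_phaseRotation_neg_mul_mul hR p 0 T).const_smul (-Complex.I)
  simp only [← intervalIntegral.integral_smul] at hmean
  have hlim := (tendsto_inv_smul_sub_one hT hsmall hcont hbound hmean fun ρ =>
    (hY ρ).phaseRotation_neg_mul hp).const_smul Complex.I
  rw [intervalIntegral.integral_smul, smul_smul, mul_neg, Complex.I_mul_I, neg_neg,
    one_smul] at hlim
  refine hlim.congr fun ρ => ?_
  rw [inv_inv, ← Complex.coe_smul, smul_smul]
  congr 1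
  push_cast
  ring

end IsFundamentalSolution

end Averaging

section PhaseDeterminant

variable {n : Type*} [Fintype n] [DecidableEq n]

/-- The characteristic determinant of `M` at `e^{2iφ}`, normalized as `det (e^{-iφ} M - e^{iφ})`:
its argument is then independent of `φ`, up to sign, when `M̄ M = 1`. -/
def phaseDet (M : Matrix n n ℂ) (φ : ℝ) : ℂ :=
  (Complex.exp (-(φ * Complex.I)) • M - Complex.exp (φ * Complex.I) • (1 : Matrix n n ℂ)).det

theorem continuous_phaseDet (M : Matrix n n ℂ) : Continuous (phaseDet M) :=
  Continuous.matrix_det (by fun_prop)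

theorem conj_phaseDet {M : Matrix n n ℂ} (hM : M.map (starRingEnd ℂ) * M = 1) (φ : ℝ) :
    (starRingEnd ℂ) (phaseDet M φ) =
      (-M.map (starRingEnd ℂ)).det * phaseDet M φ := by
  have hfactor : (Complex.exp (-(φ * Complex.I)) • M -
        Complex.exp (φ * Complex.I) • (1 : Matrix n n ℂ)).map (starRingEnd ℂ) =
      -M.map (starRingEnd ℂ) *
        (Complex.exp (-(φ * Complex.I)) • M - Complex.exp (φ * Complex.I) • 1) := by
    rw [mul_sub, mul_smul_comm, mul_smul_comm, neg_mul, hM, mul_one]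
    ext i j
    by_cases hij : i = j <;>
      simp [hij, ← Complex.exp_conj, sub_eq_add_neg, add_comm]
  rw [phaseDet, RingHom.map_det, RingHom.mapMatrix_apply, hfactor, Matrix.det_mul]

theorem phaseDet_div_re_pos {M : Matrix n n ℂ} (hM : M.map (starRingEnd ℂ) * M = 1)
    (hne : ∀ φ, phaseDet M φ ≠ 0) (φ₀ φ₁ : ℝ) : 0 < (phaseDet M φ₁ / phaseDet M φ₀).re := by
  have hdet : (-M.map (starRingEnd ℂ)).det ≠ 0 := fun h =>
    hne φ₀ (by simpa [h] using conj_phaseDet hM φ₀)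
  have hreal (φ : ℝ) : (phaseDet M φ / phaseDet M φ₀).im = 0 := by
    rw [← Complex.conj_eq_iff_im, map_div₀, conj_phaseDet hM, conj_phaseDet hM,
      mul_div_mul_left _ _ hdet]
  have hcont : Continuous fun φ => (phaseDet M φ / phaseDet M φ₀).re :=
    Complex.continuous_re.comp ((continuous_phaseDet M).div_const _)
  by_contra! hneg
  obtain ⟨φ, hφ⟩ := mem_range_of_exists_le_of_exists_ge hcont (c := 0) ⟨φ₁, hneg⟩
    ⟨φ₀, by simp [div_self (hne φ₀)]⟩
  exact div_ne_zero (hne φ) (hne φ₀) (Complex.ext hφ (hreal φ))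

end PhaseDeterminant

section OddRoots

open Polynomial

theorem exists_re_eval_div_neg_of_odd_rootMultiplicity {R : ℂ[X]} {μ : ℝ}
    (hodd : Odd (R.rootMultiplicity (μ : ℂ))) :
    ∃ s₁ s₂ : ℝ, R.eval (s₁ : ℂ) ≠ 0 ∧ (R.eval (s₂ : ℂ) / R.eval (s₁ : ℂ)).re < 0 := by
  have hR : R ≠ 0 := by
    rintro rfl
    simp at hodd
  obtain ⟨q, hq, hndvd⟩ := R.exists_eq_pow_rootMultiplicity_mul_and_not_dvd hR (μ : ℂ)
  have hqμ : q.eval (μ : ℂ) ≠ 0 := fun h => hndvd (dvd_iff_isRoot.2 h)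
  have heval (h : ℝ) : R.eval ((μ + h : ℝ) : ℂ) =
      (h : ℂ) ^ R.rootMultiplicity (μ : ℂ) * q.eval ((μ + h : ℝ) : ℂ) := by
    conv_lhs => rw [hq]
    simp
  have hcont (c : ℝ) : Continuous fun h : ℝ => q.eval ((μ + c * h : ℝ) : ℂ) := by fun_prop
  have hratio : Tendsto (fun h : ℝ => (q.eval ((μ + 1 * h : ℝ) : ℂ) /
      q.eval ((μ + -1 * h : ℝ) : ℂ)).re) (𝓝[≠] 0) (𝓝 1) := by
    have hlim := ((hcont 1).tendsto 0).div ((hcont (-1)).tendsto 0) (by simpa using hqμ)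
    have hre := ((Complex.continuous_re.tendsto _).comp hlim).mono_left
      (nhdsWithin_le_nhds (s := {0}ᶜ))
    simpa [hqμ, Function.comp_def] using hre
  have hne : ∀ᶠ h : ℝ in 𝓝[≠] 0, q.eval ((μ + -1 * h : ℝ) : ℂ) ≠ 0 :=
    ((hcont (-1)).tendsto 0).mono_left nhdsWithin_le_nhds |>.eventually_ne (by simpa using hqμ)
  obtain ⟨h, hpos, hqh, hh⟩ := ((hratio.eventually_const_lt one_pos).and
    (hne.and self_mem_nhdsWithin)).exists
  have hh : (h : ℂ) ≠ 0 := Complex.ofReal_ne_zero.2 hh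
  refine ⟨μ + -1 * h, μ + 1 * h, ?_, ?_⟩
  · rw [heval]
    exact mul_ne_zero (pow_ne_zero _ (by simpa using hh)) hqh
  · rw [heval, heval, mul_div_mul_comm, ← div_pow]
    have hsign : ((1 * h : ℝ) : ℂ) / ((-1 * h : ℝ) : ℂ) = -1 := by
      push_cast; field_simp
    rw [hsign, hodd.neg_one_pow, neg_one_mul, Complex.neg_re]
    exact neg_neg_of_pos hpos

theorem rootMultiplicity_mul_comp_C_sub_X {P : ℂ[X]} (hP : P ≠ 0) (w μ : ℂ) :
    (P * P.comp (C w - X)).rootMultiplicity μ =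
      P.rootMultiplicity μ + P.rootMultiplicity (w - μ) := by
  have hreflect : C w - X = C (-1 : ℂ) * X + C w := by simp; ring
  have hinvol : (P.comp (C w - X)).comp (C w - X) = P := by
    rw [comp_assoc, sub_comp, C_comp, X_comp, sub_sub_cancel, comp_X]
  have hcomp : P.comp (C w - X) ≠ 0 := fun h => hP (by rw [← hinvol, h, zero_comp])
  rw [rootMultiplicity_mul (mul_ne_zero hP hcomp), hreflect,
    rootMultiplicity_comp_C_mul_X_add_C _ _ _ _ (by simp)]
  congr 2
  ring

theorem exists_odd_rootMultiplicity_add_of_diam_ne_zero {P : ℂ[X]} {μ₁ μ₂ μ₃ : ℝ}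
    (h₁ : Odd (P.rootMultiplicity (μ₁ : ℂ))) (h₂ : Odd (P.rootMultiplicity (μ₂ : ℂ)))
    (h₃ : Odd (P.rootMultiplicity (μ₃ : ℂ)))
    (hdiam : ∀ ν₁ ν₂ ν₃ : ℝ, P.IsRoot (ν₁ : ℂ) → P.IsRoot (ν₂ : ℂ) → P.IsRoot (ν₃ : ℂ) →
      diam {μ₁ + ν₁, μ₂ + ν₂, μ₃ + ν₃} ≠ 0) (w : ℝ) :
    ∃ μ : ℝ, Odd (P.rootMultiplicity (μ : ℂ) + P.rootMultiplicity ((w - μ : ℝ) : ℂ)) := by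
  by_contra! heven
  have hroot {μ : ℝ} (hμ : Odd (P.rootMultiplicity (μ : ℂ))) : P.IsRoot ((w - μ : ℝ) : ℂ) := by
    have hodd := (Nat.even_add'.1 (Nat.not_odd_iff_even.1 (heven μ))).1 hμ
    exact (rootMultiplicity_pos'.1 hodd.pos).2
  exact hdiam _ _ _ (hroot h₁) (hroot h₂) (hroot h₃) (by simp)

end OddRoots

section WaveSystem

open scoped Matrix Matrix.Norms.L2Operator

theorem exists_norm_le_of_periodic_of_continuous {E : Type*} [SeminormedAddCommGroup E]
    {f : ℝ → E} {T : ℝ} (hcont : Continuous f) (hT : T ≠ 0) (hper : Function.Periodic f T) :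
    ∃ K : NNReal, ∀ x, ‖f x‖ ≤ K := by
  obtain ⟨K, hK⟩ := (hper.isBounded_of_continuous hT hcont).exists_norm_le
  exact ⟨K.toNNReal, fun x => (hK _ (mem_range_self x)).trans (Real.le_coe_toNNReal K)⟩

variable {n : Type*}

/-- For `y = (y₊, y₋)`, the amplitudes of the waves `e^{iρx}` and `e^{-iρx}`: the value
`y₊ + y₋` of the oscillating function. -/
def waveValue (y : n ⊕ n → ℂ) : n → ℂ := fun i => y (.inl i) + y (.inr i)

/-- The derivative `iρ (y₊ - y₋)` of the oscillating function with amplitudes `y = (y₊, y₋)`. -/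
def waveSlope (ρ : ℝ) (y : n ⊕ n → ℂ) : n → ℂ := fun i =>
  ρ * Complex.I * (y (.inl i) - y (.inr i))

theorem eq_zero_of_waveValue_of_waveSlope {ρ : ℝ} (hρ : ρ ≠ 0) {y : n ⊕ n → ℂ}
    (hvalue : waveValue y = 0) (hslope : waveSlope ρ y = 0) : y = 0 := by
  have hdiff (i : n) : y (.inl i) - y (.inr i) = 0 := by
    simpa [waveSlope, hρ] using congrFun hslope i
  have hsum (i : n) : y (.inl i) + y (.inr i) = 0 := congrFun hvalue i
  ext (i | i)
  · simp only [Pi.zero_apply]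
    linear_combination (hsum i + hdiff i) / 2
  · simp only [Pi.zero_apply]
    linear_combination (hsum i - hdiff i) / 2

theorem waveValue_smul (z : ℂ) (y : n ⊕ n → ℂ) : waveValue (z • y) = z • waveValue y := by
  ext i; simp [waveValue, mul_add]

theorem hasDerivAt_waveValue {y : ℝ → n ⊕ n → ℂ} {y' : n ⊕ n → ℂ} {x : ℝ}
    (hy : HasDerivAt y y' x) : HasDerivAt (fun x => waveValue (y x)) (waveValue y') x :=
  hasDerivAt_pi.2 fun i => (hasDerivAt_pi.1 hy (.inl i)).add (hasDerivAt_pi.1 hy (.inr i))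

theorem hasDerivAt_waveSlope {ρ : ℝ} {y : ℝ → n ⊕ n → ℂ} {y' : n ⊕ n → ℂ} {x : ℝ}
    (hy : HasDerivAt y y' x) : HasDerivAt (fun x => waveSlope ρ (y x)) (waveSlope ρ y') x :=
  hasDerivAt_pi.2 fun i =>
    ((hasDerivAt_pi.1 hy (.inl i)).sub (hasDerivAt_pi.1 hy (.inr i))).const_mul _

/-- The projection of `ℂⁿ ⊕ ℂⁿ` onto the amplitude of `e^{iρx}`. -/
def waveProj (n : Type*) [DecidableEq n] : Matrix (n ⊕ n) (n ⊕ n) ℂ := .fromBlocks 1 0 0 0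

theorem one_sub_waveProj [DecidableEq n] : 1 - waveProj n = .fromBlocks 0 0 0 1 := by
  rw [sub_eq_iff_eq_add, waveProj, Matrix.fromBlocks_add]
  simp

/-- The coupling of the two amplitudes by the potential. Variation of constants turns
`-Ψ'' + QΨ = ρ²Ψ` into `y' = iρ(2p - 1)y + (2iρ)⁻¹ (waveCoupling Q) y` with `p = waveProj n`. -/
def waveCoupling (Q : Matrix n n ℂ) : Matrix (n ⊕ n) (n ⊕ n) ℂ := .fromBlocks Q Q (-Q) (-Q)

theorem continuous_waveCoupling : Continuous (waveCoupling (n := n)) := by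
  unfold waveCoupling
  fun_prop

variable [Fintype n] [DecidableEq n]

/-- The coefficient of the first-order system of `-Ψ'' + QΨ = ρ²Ψ` in the amplitudes of
`e^{± iρx}`. -/
abbrev waveCoefficient (Q : ℝ → Matrix n n ℂ) : ℝ → ℝ → Matrix (n ⊕ n) (n ⊕ n) ℂ :=
  rotatingCoefficient (waveProj n) fun x => waveCoupling (Q x)

theorem isIdempotentElem_waveProj : IsIdempotentElem (waveProj n) := by
  simp [IsIdempotentElem, waveProj, Matrix.fromBlocks_multiply]

theorem pinching_waveProj_waveCoupling (Q : Matrix n n ℂ) :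
    pinching (waveProj n) (waveCoupling Q) = .fromBlocks Q 0 0 (-Q) := by
  rw [pinching, one_sub_waveProj]
  simp [waveProj, waveCoupling, Matrix.fromBlocks_multiply, Matrix.fromBlocks_add]

theorem waveCoefficient_mulVec_inl (Q : ℝ → Matrix n n ℂ) (ρ x : ℝ) (y : n ⊕ n → ℂ) (i : n) :
    (waveCoefficient Q ρ x *ᵥ y) (.inl i) =
      ρ * Complex.I * y (.inl i) + (2 * (ρ * Complex.I))⁻¹ * (Q x *ᵥ waveValue y) i := by
  have hvalue : waveValue y = y ∘ Sum.inl + y ∘ Sum.inr := rfl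
  rw [waveCoefficient, rotatingCoefficient, one_sub_waveProj, Matrix.add_mulVec,
    Matrix.smul_mulVec, Matrix.smul_mulVec, Matrix.sub_mulVec, waveProj, waveCoupling]
  simp only [hvalue, Matrix.fromBlocks_mulVec, Matrix.mulVec_add, Matrix.neg_mulVec, Pi.add_apply,
    Pi.smul_apply, Pi.sub_apply, Sum.elim_inl, Matrix.one_mulVec, Matrix.zero_mulVec,
    Pi.zero_apply, Function.comp_apply, smul_eq_mul]
  ring

theorem waveCoefficient_mulVec_inr (Q : ℝ → Matrix n n ℂ) (ρ x : ℝ) (y : n ⊕ n → ℂ) (i : n) :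
    (waveCoefficient Q ρ x *ᵥ y) (.inr i) =
      -(ρ * Complex.I * y (.inr i) + (2 * (ρ * Complex.I))⁻¹ * (Q x *ᵥ waveValue y) i) := by
  have hvalue : waveValue y = y ∘ Sum.inl + y ∘ Sum.inr := rfl
  rw [waveCoefficient, rotatingCoefficient, one_sub_waveProj, Matrix.add_mulVec,
    Matrix.smul_mulVec, Matrix.smul_mulVec, Matrix.sub_mulVec, waveProj, waveCoupling]
  simp only [hvalue, Matrix.fromBlocks_mulVec, Matrix.mulVec_add, Matrix.neg_mulVec, Pi.add_apply,
    Pi.smul_apply, Pi.sub_apply, Sum.elim_inr, Matrix.one_mulVec, Matrix.zero_mulVec,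
    Pi.zero_apply, Pi.neg_apply, Function.comp_apply, smul_eq_mul]
  ring

theorem waveValue_waveCoefficient_mulVec (Q : ℝ → Matrix n n ℂ) (ρ x : ℝ) (y : n ⊕ n → ℂ) :
    waveValue (waveCoefficient Q ρ x *ᵥ y) = waveSlope ρ y := by
  ext i
  rw [waveValue, waveCoefficient_mulVec_inl, waveCoefficient_mulVec_inr, waveSlope]
  ring

theorem waveSlope_waveCoefficient_mulVec (Q : ℝ → Matrix n n ℂ) {ρ : ℝ} (hρ : ρ ≠ 0) (x : ℝ)
    (y : n ⊕ n → ℂ) :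
    waveSlope ρ (waveCoefficient Q ρ x *ᵥ y) = Q x *ᵥ waveValue y - (ρ : ℂ) ^ 2 • waveValue y := by
  have hρ : (ρ : ℂ) ≠ 0 := Complex.ofReal_ne_zero.2 hρ
  ext i
  rw [waveSlope, waveCoefficient_mulVec_inl, waveCoefficient_mulVec_inr]
  simp only [Pi.sub_apply, Pi.smul_apply, smul_eq_mul, waveValue]
  have hhalf : ρ * Complex.I * (2 * (ρ * Complex.I))⁻¹ = 1 / 2 := by
    field_simp [Complex.I_ne_zero]
  linear_combination 2 * (Q x *ᵥ waveValue y) i * hhalf +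
    (y (.inl i) + y (.inr i)) * ρ ^ 2 * Complex.I_sq

theorem hasDerivAt_mulVec_const {k : Type*} [Fintype k] {Y : ℝ → Matrix k k ℂ}
    {Y' : Matrix k k ℂ} {x : ℝ} (hY : HasDerivAt Y Y' x) (v : k → ℂ) :
    HasDerivAt (fun x => Y x *ᵥ v) (Y' *ᵥ v) x := by
  let evalAt : Matrix k k ℂ →ₗ[ℝ] k → ℂ := (Matrix.mulVecBilin ℝ ℝ).flip v
  exact evalAt.toContinuousLinearMap.hasFDerivAt.comp_hasDerivAt x hY

/-- Entrywise complex conjugation, as a continuous homomorphism of real algebras. -/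
def matrixConj (k : Type*) [Fintype k] [DecidableEq k] : Matrix k k ℂ →A[ℝ] Matrix k k ℂ where
  toAlgHom := AlgHom.mapMatrix Complex.conjAe.toAlgHom
  cont := continuous_id.matrix_map Complex.continuous_conj

theorem matrixConj_apply {k : Type*} [Fintype k] [DecidableEq k] (M : Matrix k k ℂ) :
    matrixConj k M = M.map (starRingEnd ℂ) := rfl

end WaveSystem

section BlochFunctions

open scoped Matrix Matrix.Norms.L2Operator

variable {n : Type*} [Fintype n] [DecidableEq n]

theorem exists_mulVec_eq_smul_of_phaseDet_eq_zero {M : Matrix n n ℂ} {φ : ℝ}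
    (h : phaseDet M φ = 0) : ∃ z : ℂ, ‖z‖ = 1 ∧ ∃ v ≠ 0, M *ᵥ v = z • v := by
  obtain ⟨v, hv, hMv⟩ := Matrix.exists_mulVec_eq_zero_iff.2 h
  refine ⟨Complex.exp ((φ + φ : ℝ) * Complex.I), Complex.norm_exp_ofReal_mul_I _, v, hv, ?_⟩
  rw [Matrix.sub_mulVec, Matrix.smul_mulVec, Matrix.smul_mulVec, Matrix.one_mulVec,
    sub_eq_zero] at hMv
  have hcancel : Complex.exp (φ * Complex.I) * Complex.exp (-(φ * Complex.I)) = 1 := by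
    rw [← Complex.exp_add, add_neg_cancel, Complex.exp_zero]
  have hscaled := congrArg (Complex.exp (φ * Complex.I) • ·) hMv
  simp only [smul_smul, hcancel, one_smul, ← Complex.exp_add] at hscaled
  rw [hscaled, Complex.ofReal_add, add_mul]

theorem exists_blochPhase_eq {z : ℂ} (hz : ‖z‖ = 1) : ∃ t ∈ Ioc (-1 : ℝ) 1, blochPhase t = z := by
  have hπ : (Real.pi : ℂ) ≠ 0 := Complex.ofReal_ne_zero.2 Real.pi_ne_zero
  refine ⟨z.arg / Real.pi, ⟨?_, ?_⟩, ?_⟩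
  · rw [lt_div_iff₀ Real.pi_pos, neg_one_mul]
    exact Complex.neg_pi_lt_arg z
  · rw [div_le_one Real.pi_pos]
    exact Complex.arg_le_pi z
  · have hexp : Complex.I * Real.pi * (z.arg / Real.pi : ℝ) = z.arg * Complex.I := by
      push_cast
      field_simp
    rw [blochPhase, hexp]
    simpa [hz] using Complex.norm_mul_exp_arg_mul_I z

theorem isBlochPair_of_hasDerivAt {m : ℕ} {Q : ℝ → Matrix (Fin m) (Fin m) ℂ} (hQ : Continuous Q)
    {Ψ Φ : ℝ → Fin m → ℂ} {t : ℝ} {lam : ℂ} (hne : Ψ ≠ 0) (hΨ : ∀ x, HasDerivAt Ψ (Φ x) x)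
    (hΦ : ∀ x, HasDerivAt Φ (Q x *ᵥ Ψ x - lam • Ψ x) x)
    (hphase : ∀ x, Ψ (x + Real.pi) = blochPhase t • Ψ x) : IsBlochPair Q t lam Ψ := by
  have hderiv : deriv Ψ = Φ := funext fun x => (hΨ x).deriv
  have hderiv₂ : deriv Φ = fun x => Q x *ᵥ Ψ x - lam • Ψ x := funext fun x => (hΦ x).deriv
  have hcont : Continuous Ψ := continuous_iff_continuousAt.2 fun x => (hΨ x).continuousAt
  refine ⟨hne, ?_, fun x => ?_, hphase⟩
  · rw [show (2 : WithTop ℕ∞) = 1 + 1 from rfl, contDiff_succ_iff_deriv, hderiv,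
      contDiff_one_iff_deriv, hderiv₂]
    exact ⟨fun x => (hΨ x).differentiableAt, by simp, fun x => (hΦ x).differentiableAt,
      (hQ.matrix_mulVec hcont).sub (hcont.const_smul lam)⟩
  · simp only [hderiv, hderiv₂, neg_sub, sub_add_cancel]

theorem mem_SpecLQ_of_phaseDet_eq_zero {m : ℕ} {Q : ℝ → Matrix (Fin m) (Fin m) ℂ}
    (hQ : Continuous Q) {ρ : ℝ} (hρ : ρ ≠ 0)
    {Y : ℝ → Matrix (Fin m ⊕ Fin m) (Fin m ⊕ Fin m) ℂ}
    (hY : IsFundamentalSolution (waveCoefficient Q ρ) Y)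
    (hper : ∀ x, Y (x + Real.pi) = Y x * Y Real.pi) {φ : ℝ}
    (hφ : phaseDet (Y Real.pi) φ = 0) : (ρ : ℂ) ^ 2 ∈ SpecLQ Q := by
  obtain ⟨z, hz, v, hv, hzv⟩ := exists_mulVec_eq_smul_of_phaseDet_eq_zero hφ
  obtain ⟨t, ht, rfl⟩ := exists_blochPhase_eq hz
  have hy (x : ℝ) : HasDerivAt (fun x => Y x *ᵥ v) (waveCoefficient Q ρ x *ᵥ (Y x *ᵥ v)) x := by
    rw [Matrix.mulVec_mulVec]
    exact hasDerivAt_mulVec_const (hY.hasDerivAt x) v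
  have hvalue (x : ℝ) := hasDerivAt_waveValue (hy x)
  have hslope (x : ℝ) := hasDerivAt_waveSlope (ρ := ρ) (hy x)
  simp only [waveValue_waveCoefficient_mulVec] at hvalue
  simp only [waveSlope_waveCoefficient_mulVec Q hρ] at hslope
  refine ⟨t, ht, _, isBlochPair_of_hasDerivAt hQ (fun h => hv ?_) hvalue hslope fun x => ?_⟩
  · have hvalue₀ : waveValue (Y 0 *ᵥ v) = 0 := congrFun h 0
    have hslope₀ : waveSlope ρ (Y 0 *ᵥ v) = 0 :=
      (hvalue 0).unique (h ▸ hasDerivAt_const (0 : ℝ) (0 : Fin m → ℂ))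
    rw [hY.map_zero, Matrix.one_mulVec] at hvalue₀ hslope₀
    exact eq_zero_of_waveValue_of_waveSlope hρ hvalue₀ hslope₀
  · simp only [hper, ← Matrix.mulVec_mulVec, hzv, Matrix.mulVec_smul, waveValue_smul]

end BlochFunctions

section SpectralPencil

open scoped Matrix Matrix.Norms.L2Operator

/-- The deviation of `e^{2iρT}` from `1`, on the scale of the perturbation: it measures how far
the frequencies `ρ` and `-ρ` are from being resonant modulo `2π / T`. -/
def resonance (T ρ : ℝ) : ℂ :=
  2 * (ρ * Complex.I) * (1 - Complex.exp ((2 * (ρ * T) : ℝ) * Complex.I))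

theorem im_resonance (T : ℝ) {ρ : ℝ} (hρ : ρ ≠ 0) :
    (resonance T ρ).im = ‖resonance T ρ‖ ^ 2 * (4 * ρ)⁻¹ := by
  have hre : (resonance T ρ).re = 2 * ρ * Real.sin (2 * (ρ * T)) := by
    simp [resonance, Complex.exp_re, Complex.exp_im]
  have him : (resonance T ρ).im = 2 * ρ * (1 - Real.cos (2 * (ρ * T))) := by
    simp [resonance, Complex.exp_re, Complex.exp_im]
  rw [← Complex.normSq_eq_norm_sq, Complex.normSq_apply, hre, him, ← div_eq_mul_inv,
    eq_div_iff (by simpa using hρ)]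
  linear_combination (-4 * ρ ^ 2) * Real.sin_sq_add_cos_sq (2 * (ρ * T))

theorem tendsto_inv_four_mul_atTop : Tendsto (fun ρ : ℝ => (4 * ρ)⁻¹) atTop (𝓝[>] 0) :=
  tendsto_inv_atTop_nhdsGT_zero.comp (tendsto_id.const_mul_atTop (by norm_num))

theorem im_eq_zero_of_tendsto_resonance {U : Filter ℝ} [U.NeBot] (hU : U ≤ atTop) {T : ℝ} {w : ℂ}
    (hw : Tendsto (resonance T) U (𝓝 w)) : w.im = 0 := by
  have hlim := (hw.norm.pow 2).mul ((tendsto_inv_four_mul_atTop.mono_left hU).mono_right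
    nhdsWithin_le_nhds)
  rw [mul_zero] at hlim
  refine tendsto_nhds_unique ((Complex.continuous_im.tendsto _).comp hw) (hlim.congr' ?_)
  filter_upwards [hU (eventually_ne_atTop 0)] with ρ hρ using (im_resonance T hρ).symm

/-- The effect `2iρ(e^{is/4ρ} - e^{-is/4ρ})` of shifting the Bloch phase by `-s / 4ρ`, on the scale
of the perturbation. -/
def detuning (s ρ : ℝ) : ℂ :=
  2 * (ρ * Complex.I) *
    (Complex.exp (s / (4 * ρ) * Complex.I) - Complex.exp (-(s / (4 * ρ) * Complex.I)))

theorem tendsto_detuning (s : ℝ) : Tendsto (detuning s) atTop (𝓝 (-(s : ℂ))) := by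
  have hphase : HasDerivAt (fun y : ℝ => (s * y * Complex.I : ℂ)) (s * Complex.I) 0 := by
    simpa using (((hasDerivAt_id (0 : ℝ)).ofReal_comp).const_mul (s : ℂ)).mul_const Complex.I
  have hwave : HasDerivAt (fun y : ℝ => Complex.exp (s * y * Complex.I) -
      Complex.exp (-(s * y * Complex.I))) (2 * (s * Complex.I)) 0 :=
    (hphase.cexp.sub hphase.neg.cexp).congr_deriv (by simp [two_mul])
  have hslope := (hwave.tendsto_slope_zero_right.comp tendsto_inv_four_mul_atTop).const_mul
    (Complex.I / 2)
  rw [show Complex.I / 2 * (2 * (s * Complex.I)) = -(s : ℂ) by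
    linear_combination (s : ℂ) * Complex.I_sq] at hslope
  refine hslope.congr fun ρ => ?_
  simp only [Function.comp_apply, zero_add, inv_inv, Complex.real_smul,
    Complex.ofReal_zero, mul_zero, zero_mul, neg_zero, sub_self, sub_zero, detuning, div_eq_mul_inv,
    Complex.ofReal_mul, Complex.ofReal_inv, Complex.ofReal_ofNat]
  ring

theorem tendsto_exp_div_mul_I (c : ℂ) :
    Tendsto (fun ρ : ℝ => Complex.exp (c / (4 * ρ) * Complex.I)) atTop (𝓝 1) := by
  have hcont : Continuous fun y : ℝ => Complex.exp (c * y * Complex.I) := by fun_prop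
  simpa [Function.comp_def, div_eq_mul_inv] using
    (hcont.tendsto 0).comp (tendsto_inv_four_mul_atTop.mono_right nhdsWithin_le_nhds)

variable {n : Type*} [Fintype n] [DecidableEq n]

/-- The matrices acting as a scalar on each of the two wave amplitudes. -/
def blockScalar (n : Type*) [Fintype n] [DecidableEq n] :
    ℂ × ℂ →ₐ[ℂ] Matrix (n ⊕ n) (n ⊕ n) ℂ where
  toFun z := .fromBlocks (z.1 • 1) 0 0 (z.2 • 1)
  map_one' := by simp
  map_mul' := by simp [Matrix.fromBlocks_multiply, smul_smul, mul_comm]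
  map_zero' := by simp
  map_add' := by simp [Matrix.fromBlocks_add, add_smul]
  commutes' := by simp [Algebra.algebraMap_eq_smul_one, ← Matrix.fromBlocks_one,
    Matrix.fromBlocks_smul]

theorem blockScalar_apply (z : ℂ × ℂ) :
    blockScalar n z = .fromBlocks (z.1 • 1) 0 0 (z.2 • 1) := rfl

theorem continuous_blockScalar : Continuous (blockScalar n) := by
  change Continuous fun z : ℂ × ℂ => Matrix.fromBlocks _ _ _ _
  fun_prop

theorem phaseRotation_waveProj (y : ℝ) : phaseRotation (waveProj n) y =
    blockScalar n (Complex.exp (y * Complex.I), Complex.exp (-(y * Complex.I))) := by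
  rw [phaseRotation, one_sub_waveProj, waveProj, Matrix.fromBlocks_smul, Matrix.fromBlocks_smul,
    Matrix.fromBlocks_add, blockScalar_apply]
  simp

/-- The matrix whose determinant decides whether `e^{iρT - is/2ρ}` is a multiplier of the
propagator `Y = phaseRotation p (ρT) * C`, rescaled so as to have a limit as `ρ → ∞`. -/
def bandPencil (T ρ s : ℝ) (C : Matrix (n ⊕ n) (n ⊕ n) ℂ) : Matrix (n ⊕ n) (n ⊕ n) ℂ :=
  (2 * (ρ * Complex.I)) • (Complex.exp (s / (4 * ρ) * Complex.I) • C -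
    Complex.exp (-(s / (4 * ρ) * Complex.I)) •
      blockScalar n (1, Complex.exp ((2 * (ρ * T) : ℝ) * Complex.I)))

theorem bandPencil_eq (T ρ s : ℝ) (C : Matrix (n ⊕ n) (n ⊕ n) ℂ) :
    bandPencil T ρ s C =
      Complex.exp (s / (4 * ρ) * Complex.I) • ((2 * (ρ * Complex.I)) • (C - 1)) +
        blockScalar n (detuning s ρ,
          detuning s ρ + Complex.exp (-(s / (4 * ρ) * Complex.I)) * resonance T ρ) := by
  have hrest : blockScalar n (detuning s ρ,
      detuning s ρ + Complex.exp (-(s / (4 * ρ) * Complex.I)) * resonance T ρ) =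
      (2 * (ρ * Complex.I)) • (Complex.exp (s / (4 * ρ) * Complex.I) • 1 -
        Complex.exp (-(s / (4 * ρ) * Complex.I)) •
          blockScalar n (1, Complex.exp ((2 * (ρ * T) : ℝ) * Complex.I))) := by
    rw [← map_one (blockScalar n), ← map_smul, ← map_smul, ← map_sub, ← map_smul]
    refine congrArg _ (Prod.ext ?_ ?_)
    · simp [detuning]
    · simp [detuning, resonance]
      ring
  rw [hrest, bandPencil]
  module

theorem bandPencil_phaseRotation_mul (T ρ s : ℝ) (M : Matrix (n ⊕ n) (n ⊕ n) ℂ) :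
    bandPencil T ρ s (phaseRotation (waveProj n) (-(ρ * T)) * M) =
      (2 * (ρ * Complex.I) * Complex.exp (ρ * T / 2 * Complex.I)) •
        (phaseRotation (waveProj n) (-(ρ * T)) *
          (Complex.exp (-((ρ * T / 2 - s / (4 * ρ) : ℝ) * Complex.I)) • M -
            Complex.exp ((ρ * T / 2 - s / (4 * ρ) : ℝ) * Complex.I) • 1)) := by
  have hfwd : Complex.exp (ρ * T / 2 * Complex.I) *
      Complex.exp (-((ρ * T / 2 - s / (4 * ρ) : ℝ) * Complex.I)) =
        Complex.exp (s / (4 * ρ) * Complex.I) := by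
    rw [← Complex.exp_add]
    congr 1
    push_cast
    ring
  have hbwd : Complex.exp (ρ * T / 2 * Complex.I) *
      Complex.exp ((ρ * T / 2 - s / (4 * ρ) : ℝ) * Complex.I) =
        Complex.exp (-(s / (4 * ρ) * Complex.I)) * Complex.exp ((ρ * T : ℝ) * Complex.I) := by
    rw [← Complex.exp_add, ← Complex.exp_add]
    congr 1
    push_cast
    ring
  have hrot : Complex.exp ((ρ * T : ℝ) * Complex.I) • phaseRotation (waveProj n) (-(ρ * T)) =
      blockScalar n (1, Complex.exp ((2 * (ρ * T) : ℝ) * Complex.I)) := by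
    rw [phaseRotation_waveProj, ← map_smul]
    congr 1
    ext <;> simp [← Complex.exp_add, two_mul, add_mul]
  rw [mul_smul _ (Complex.exp _), mul_sub, mul_smul_comm, mul_smul_comm, mul_one,
    smul_sub (Complex.exp _), smul_smul, smul_smul, hfwd, hbwd, mul_smul _ (Complex.exp _), hrot,
    bandPencil]

theorem re_det_mul_bandPencil_div_nonneg {M : Matrix (n ⊕ n) (n ⊕ n) ℂ}
    (hM : M.map (starRingEnd ℂ) * M = 1) (hne : ∀ φ, phaseDet M φ ≠ 0)
    (G : Matrix (n ⊕ n) (n ⊕ n) ℂ) (T ρ s₁ s₂ : ℝ) :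
    0 ≤ ((G * bandPencil T ρ s₂ (phaseRotation (waveProj n) (-(ρ * T)) * M)).det /
      (G * bandPencil T ρ s₁ (phaseRotation (waveProj n) (-(ρ * T)) * M)).det).re := by
  obtain ⟨c, hdet⟩ : ∃ c, ∀ s,
      (G * bandPencil T ρ s (phaseRotation (waveProj n) (-(ρ * T)) * M)).det =
        c * phaseDet M (ρ * T / 2 - s / (4 * ρ)) := by
    refine ⟨((2 * (ρ * Complex.I) * Complex.exp (ρ * T / 2 * Complex.I)) •
      (G * phaseRotation (waveProj n) (-(ρ * T)))).det, fun s => ?_⟩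
    rw [bandPencil_phaseRotation_mul, mul_smul_comm, ← mul_assoc G, ← smul_mul_assoc,
      Matrix.det_mul, phaseDet]
  rw [hdet, hdet]
  obtain rfl | hc := eq_or_ne c 0
  · simp
  · rw [mul_div_mul_left _ _ hc]
    exact (phaseDet_div_re_pos hM hne _ _).le

theorem tendsto_det_mul_bandPencil {U : Filter ℝ} (hU : U ≤ atTop)
    {C : ℝ → Matrix (n ⊕ n) (n ⊕ n) ℂ} {A : Matrix n n ℂ}
    (hC : Tendsto (fun ρ : ℝ => (2 * (ρ * Complex.I)) • (C ρ - 1)) U (𝓝 (.fromBlocks A 0 0 (-A))))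
    {T : ℝ} {κ : ℝ → ℂ} {k b : ℂ} (hκ : Tendsto κ U (𝓝 k))
    (hb : Tendsto (fun ρ => κ ρ * resonance T ρ) U (𝓝 b)) (s : ℝ) :
    Tendsto (fun ρ => (blockScalar n (-1, κ ρ) * bandPencil T ρ s (C ρ)).det) U
      (𝓝 (A.charpoly.eval (s : ℂ) * ((b - k * s) • 1 - k • A).det)) := by
  have hfwd := (tendsto_exp_div_mul_I s).mono_left hU
  have hbwd := (tendsto_exp_div_mul_I (-s)).mono_left hU
  have hdetune := (tendsto_detuning s).mono_left hU
  have hweight := (continuous_blockScalar (n := n)).tendsto _ |>.comp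
    ((tendsto_const_nhds (x := (-1 : ℂ))).prodMk_nhds hκ)
  have hscalar := (continuous_blockScalar (n := n)).tendsto _ |>.comp
    (hdetune.neg.prodMk_nhds ((hκ.mul hdetune).add (hbwd.mul hb)))
  have hlim := (hweight.mul (hfwd.smul hC)).add hscalar
  have hval : blockScalar n (-1, k) * (1 : ℂ) • .fromBlocks A 0 0 (-A) +
      blockScalar n (-(-(s : ℂ)), k * -s + 1 * b) =
        .fromBlocks ((s : ℂ) • 1 - A) 0 0 ((b - k * s) • 1 - k • A) := by
    simp only [blockScalar_apply, one_smul, Matrix.fromBlocks_multiply, Matrix.fromBlocks_add]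
    simp [sub_eq_add_neg, add_comm]
  rw [hval] at hlim
  have hlimdet := ((continuous_id.matrix_det).tendsto _).comp hlim
  rw [id_eq, Matrix.det_fromBlocks_zero₂₁] at hlimdet
  rw [Matrix.eval_charpoly, Matrix.scalar_apply, ← Matrix.smul_one_eq_diagonal]
  refine hlimdet.congr fun ρ => ?_
  simp only [Function.comp_apply, id_eq]
  rw [bandPencil_eq, mul_add, ← map_mul]
  congr 3
  simp only [Prod.mk_mul_mk, neg_div, neg_mul, one_mul, mul_add, mul_left_comm]

end SpectralPencil

section Propagator

open scoped Matrix Matrix.Norms.L2Operator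

theorem matrix_intervalIntegral_apply {k : Type*} [Fintype k] [DecidableEq k]
    {f : ℝ → Matrix k k ℂ} (hf : Continuous f) (a b : ℝ) (i j : k) :
    (∫ x in a..b, f x) i j = ∫ x in a..b, f x i j :=
  ((Matrix.entryLinearMap ℝ ℂ i j).toContinuousLinearMap.intervalIntegral_comp_comm
    (hf.intervalIntegrable a b)).symm

theorem integral_pinching_waveCoupling {m : ℕ} {Q : ℝ → Matrix (Fin m) (Fin m) ℂ}
    (hQ : Continuous Q) :
    ∫ x in (0 : ℝ)..Real.pi, pinching (waveProj (Fin m)) (waveCoupling (Q x)) =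
      .fromBlocks (meanMatrix Q) 0 0 (-meanMatrix Q) := by
  simp only [pinching_waveProj_waveCoupling]
  have hcont : Continuous fun x => Matrix.fromBlocks (Q x) 0 0 (-Q x) := by fun_prop
  ext (i | i) (j | j) <;> rw [matrix_intervalIntegral_apply hcont] <;> simp [meanMatrix]

theorem neg_matrixConj_waveCoefficient {n : Type*} [Fintype n] [DecidableEq n]
    {Q : ℝ → Matrix n n ℂ} (hPT : ∀ x, (Q (-x)).map (starRingEnd ℂ) = Q x) (ρ x : ℝ) :
    -matrixConj (n ⊕ n) (waveCoefficient Q ρ (-x)) = waveCoefficient Q ρ x := by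
  refine neg_map_rotatingCoefficient (fun c a => ?_) ?_ (fun x => ?_) ρ x
  · ext
    simp [matrixConj_apply]
  · ext (i | i) (j | j) <;> simp [matrixConj_apply, waveProj, Matrix.one_apply, apply_ite]
  · rw [matrixConj_apply, waveCoupling, Matrix.fromBlocks_map, hPT,
      Matrix.map_neg _ (map_neg _), hPT, waveCoupling]

theorem exists_isFundamentalSolution_waveCoefficient {n : Type*} [Fintype n] [DecidableEq n]
    {Q : ℝ → Matrix n n ℂ} {T : ℝ} (hQ : Continuous Q) (hT : T ≠ 0) (hper : Function.Periodic Q T)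
    (hPT : ∀ x, (Q (-x)).map (starRingEnd ℂ) = Q x) (ρ : ℝ) :
    ∃ Y, IsFundamentalSolution (waveCoefficient Q ρ) Y ∧ (∀ x, Y (x + T) = Y x * Y T) ∧
      (Y T).map (starRingEnd ℂ) * Y T = 1 := by
  have hcont : Continuous (waveCoefficient Q ρ) := by
    have := continuous_waveCoupling.comp hQ
    unfold waveCoefficient rotatingCoefficient
    fun_prop
  have hper : Function.Periodic (waveCoefficient Q ρ) T := fun x => by
    simp only [waveCoefficient, rotatingCoefficient, hper x]
  obtain ⟨K, hK⟩ := exists_norm_le_of_periodic_of_continuous hcont hT hper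
  obtain ⟨Y, hY⟩ := exists_isFundamentalSolution hcont hK
  exact ⟨Y, hY, hY.map_add_period hK hper, hY.map_period_mul_self hK hper (matrixConj (n ⊕ n))
    (neg_matrixConj_waveCoefficient hPT ρ)⟩

theorem re_div_nonneg_of_eventually_notMem_SpecLQ {m : ℕ} {Q : ℝ → Matrix (Fin m) (Fin m) ℂ}
    (hQ : Continuous Q) (hper : Function.Periodic Q Real.pi)
    (hPT : ∀ x, (Q (-x)).map (starRingEnd ℂ) = Q x) {U : Filter ℝ} [U.NeBot] (hU : U ≤ atTop)
    (hgap : ∀ᶠ ρ : ℝ in U, (ρ : ℂ) ^ 2 ∉ SpecLQ Q) {κ : ℝ → ℂ} {k b : ℂ}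
    (hκ : Tendsto κ U (𝓝 k)) (hb : Tendsto (fun ρ => κ ρ * resonance Real.pi ρ) U (𝓝 b))
    {s₁ : ℝ} (s₂ : ℝ) (hs₁ : (meanMatrix Q).charpoly.eval (s₁ : ℂ) *
      ((b - k * s₁) • 1 - k • meanMatrix Q).det ≠ 0) :
    0 ≤ ((meanMatrix Q).charpoly.eval (s₂ : ℂ) * ((b - k * s₂) • 1 - k • meanMatrix Q).det /
      ((meanMatrix Q).charpoly.eval (s₁ : ℂ) *
        ((b - k * s₁) • 1 - k • meanMatrix Q).det)).re := by
  choose Y hY hYper hYconj using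
    exists_isFundamentalSolution_waveCoefficient hQ Real.pi_ne_zero hper hPT
  have hcoupling : Continuous fun x => waveCoupling (Q x) := continuous_waveCoupling.comp hQ
  have hcouplingper : Function.Periodic (fun x => waveCoupling (Q x)) Real.pi := fun x => by
    simp only [hper x]
  obtain ⟨M, hM⟩ := exists_norm_le_of_periodic_of_continuous hcoupling Real.pi_ne_zero hcouplingper
  have haverage := IsFundamentalSolution.tendsto_smul_phaseRotation_mul_sub_one
    isIdempotentElem_waveProj hcoupling hM hY Real.pi_pos.le
  rw [integral_pinching_waveCoupling hQ] at haverage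
  have hlim := tendsto_det_mul_bandPencil hU (haverage.mono_left hU) hκ hb
  refine ge_of_tendsto ((Complex.continuous_re.tendsto _).comp ((hlim s₂).div (hlim s₁) hs₁)) ?_
  filter_upwards [hgap, hU (eventually_ne_atTop 0)] with ρ hρ hρ₀
  exact re_det_mul_bandPencil_div_nonneg (hYconj ρ)
    (fun φ hφ => hρ (mem_SpecLQ_of_phaseDet_eq_zero hQ hρ₀ (hY ρ) (hYper ρ) hφ)) _ _ _ _ _

end Propagator

section SpectralGaps

theorem exists_ultrafilter_le_of_frequently {α : Type*} {f : Filter α} {p : α → Prop}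
    (h : ∃ᶠ x in f, p x) : ∃ U : Ultrafilter α, ↑U ≤ f ∧ ∀ᶠ x in U, p x := by
  have : (f ⊓ 𝓟 {x | p x}).NeBot := frequently_mem_iff_neBot.1 h
  obtain ⟨U, hU⟩ := Ultrafilter.exists_le (f ⊓ 𝓟 {x | p x})
  exact ⟨U, hU.trans inf_le_left, le_principal_iff.1 (hU.trans inf_le_right)⟩

theorem exists_tendsto_nhds_or_tendsto_cocompact {α X : Type*} [TopologicalSpace X]
    (U : Ultrafilter α) (f : α → X) : (∃ a, Tendsto f U (𝓝 a)) ∨ Tendsto f U (cocompact X) := by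
  refine or_iff_not_imp_right.2 fun h => ?_
  simp only [hasBasis_cocompact.tendsto_right_iff, not_forall] at h
  obtain ⟨K, hK, hKU⟩ := h
  obtain ⟨a, -, ha⟩ := hK.ultrafilter_le_nhds (U.map f)
    (le_principal_iff.2 ((Ultrafilter.eventually_not.2 hKU).mono fun _ hx => not_not.1 hx))
  exact ⟨a, ha⟩

theorem frequently_sq_notMem_of_forall_exists {S : Set ℂ}
    (h : ∀ H : ℝ, ∃ x ≥ H, (x : ℂ) ∉ S) : ∃ᶠ ρ : ℝ in atTop, (ρ : ℂ) ^ 2 ∉ S := by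
  refine frequently_atTop.2 fun a => ?_
  obtain ⟨x, hx, hxS⟩ := h (max a 0 ^ 2)
  refine ⟨√x, (le_max_left a 0).trans (Real.le_sqrt_of_sq_le hx), ?_⟩
  rwa [← Complex.ofReal_pow, Real.sq_sqrt ((sq_nonneg _).trans hx)]

theorem even_rootMultiplicity_add_of_tendsto_resonance {m : ℕ} {Q : ℝ → Matrix (Fin m) (Fin m) ℂ}
    (hQ : Continuous Q) (hper : Function.Periodic Q Real.pi)
    (hPT : ∀ x, (Q (-x)).map (starRingEnd ℂ) = Q x) {U : Filter ℝ} [U.NeBot] (hU : U ≤ atTop)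
    (hgap : ∀ᶠ ρ : ℝ in U, (ρ : ℂ) ^ 2 ∉ SpecLQ Q) {w : ℝ}
    (hw : Tendsto (resonance Real.pi) U (𝓝 (w : ℂ))) (μ : ℝ) :
    Even ((meanMatrix Q).charpoly.rootMultiplicity (μ : ℂ) +
      (meanMatrix Q).charpoly.rootMultiplicity ((w - μ : ℝ) : ℂ)) := by
  set P := (meanMatrix Q).charpoly
  have hP : P ≠ 0 := (meanMatrix Q).charpoly_monic.ne_zero
  have heval (s : ℝ) : P.eval (s : ℂ) * (((w : ℂ) - 1 * s) • 1 - (1 : ℂ) • meanMatrix Q).det =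
      (P * P.comp (.C (w : ℂ) - .X)).eval (s : ℂ) := by
    simp [P, Matrix.eval_charpoly, Matrix.smul_one_eq_diagonal]
  by_contra hodd
  rw [Nat.not_even_iff_odd, Complex.ofReal_sub, ← rootMultiplicity_mul_comp_C_sub_X hP] at hodd
  obtain ⟨s₁, s₂, hs₁, hneg⟩ := exists_re_eval_div_neg_of_odd_rootMultiplicity hodd
  simp only [← heval] at hs₁ hneg
  exact hneg.not_ge (re_div_nonneg_of_eventually_notMem_SpecLQ hQ hper hPT hU hgap
    tendsto_const_nhds (by simpa using hw) s₂ hs₁)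

theorem even_rootMultiplicity_of_tendsto_resonance_cobounded {m : ℕ}
    {Q : ℝ → Matrix (Fin m) (Fin m) ℂ}
    (hQ : Continuous Q) (hper : Function.Periodic Q Real.pi)
    (hPT : ∀ x, (Q (-x)).map (starRingEnd ℂ) = Q x) {U : Filter ℝ} [U.NeBot] (hU : U ≤ atTop)
    (hgap : ∀ᶠ ρ : ℝ in U, (ρ : ℂ) ^ 2 ∉ SpecLQ Q)
    (hinf : Tendsto (resonance Real.pi) U (Bornology.cobounded ℂ)) (μ : ℝ) :
    Even ((meanMatrix Q).charpoly.rootMultiplicity (μ : ℂ)) := by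
  have hone : Tendsto (fun ρ => (resonance Real.pi ρ)⁻¹ * resonance Real.pi ρ) U (𝓝 1) :=
    tendsto_const_nhds.congr' <| (hinf.eventually (Bornology.eventually_ne_cobounded 0)).mono
      fun _ hρ => (inv_mul_cancel₀ hρ).symm
  by_contra hodd
  obtain ⟨s₁, s₂, hs₁, hneg⟩ :=
    exists_re_eval_div_neg_of_odd_rootMultiplicity (Nat.not_even_iff_odd.1 hodd)
  have hnonneg := re_div_nonneg_of_eventually_notMem_SpecLQ hQ hper hPT hU hgap
    (tendsto_inv₀_cobounded.comp hinf) hone (s₁ := s₁) s₂ (by simpa using hs₁)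
  exact hneg.not_ge (by simpa using hnonneg)

end SpectralGaps

theorem statement19_general {m : ℕ} {Q : ℝ → Matrix (Fin m) (Fin m) ℂ} (hQ : Continuous Q)
    (hper : Function.Periodic Q Real.pi) (hPT : ∀ x, (Q (-x)).map (starRingEnd ℂ) = Q x)
    (hodd : ∀ w : ℝ, ∃ μ : ℝ, Odd ((meanMatrix Q).charpoly.rootMultiplicity (μ : ℂ) +
      (meanMatrix Q).charpoly.rootMultiplicity ((w - μ : ℝ) : ℂ))) :
    ∃ H : ℝ, ∀ x ≥ H, (x : ℂ) ∈ SpecLQ Q := by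
  by_contra! hgaps
  obtain ⟨U, hU, hgap⟩ := exists_ultrafilter_le_of_frequently
    (frequently_sq_notMem_of_forall_exists hgaps)
  obtain ⟨w, hw⟩ | hinf := exists_tendsto_nhds_or_tendsto_cocompact U (resonance Real.pi)
  · lift w to ℝ using im_eq_zero_of_tendsto_resonance hU hw
    obtain ⟨μ, hμ⟩ := hodd w
    exact Nat.not_even_iff_odd.2 hμ
      (even_rootMultiplicity_add_of_tendsto_resonance hQ hper hPT hU hgap hw μ)
  · rw [← Metric.cobounded_eq_cocompact] at hinf
    obtain ⟨μ, hμ⟩ := hodd 0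
    have heven := even_rootMultiplicity_of_tendsto_resonance_cobounded hQ hper hPT hU hgap hinf
    exact Nat.not_even_iff_odd.2 hμ ((heven _).add (heven _))

/-- if `A` has three distinct real eigenvalues `μ_{j₁}, μ_{j₂}, μ_{j₃}`
of odd algebraic multiplicity such that
`min over triples (i₁,i₂,i₃) of real eigenvalue indices of
diam({μ_{j₁}+μ_{i₁}, μ_{j₂}+μ_{i₂}, μ_{j₃}+μ_{i₃}}) ≠ 0` (equivalently, every such
triple has nonzero diameter), then `[H, ∞) ⊆ σ(L(Q))` for some `H`. -/
theorem statement19 {m : ℕ} (hm : 1 ≤ m) (Q : ℝ → Matrix (Fin m) (Fin m) ℂ)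
    (hQcont : Continuous Q)
    (hQper : ∀ x : ℝ, Q (x + Real.pi) = Q x)
    (hQPT : ∀ (x : ℝ) (i j : Fin m), (starRingEnd ℂ) (Q (-x) i j) = Q x i j)
    (μj₁ μj₂ μj₃ : ℝ)
    (hne₁ : μj₁ ≠ μj₂) (hne₂ : μj₁ ≠ μj₃) (hne₃ : μj₂ ≠ μj₃)
    (hroot₁ : ((meanMatrix Q).charpoly).IsRoot (μj₁ : ℂ))
    (hroot₂ : ((meanMatrix Q).charpoly).IsRoot (μj₂ : ℂ))
    (hroot₃ : ((meanMatrix Q).charpoly).IsRoot (μj₃ : ℂ))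
    (hodd₁ : Odd (((meanMatrix Q).charpoly).rootMultiplicity (μj₁ : ℂ)))
    (hodd₂ : Odd (((meanMatrix Q).charpoly).rootMultiplicity (μj₂ : ℂ)))
    (hodd₃ : Odd (((meanMatrix Q).charpoly).rootMultiplicity (μj₃ : ℂ)))
    (hd : ∀ μi₁ μi₂ μi₃ : ℝ,
      ((meanMatrix Q).charpoly).IsRoot (μi₁ : ℂ) →
      ((meanMatrix Q).charpoly).IsRoot (μi₂ : ℂ) →
      ((meanMatrix Q).charpoly).IsRoot (μi₃ : ℂ) →
      Metric.diam ({μj₁ + μi₁, μj₂ + μi₂, μj₃ + μi₃} : Set ℝ) ≠ 0) :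
    ∃ H : ℝ, ∀ x : ℝ, H ≤ x → ((x : ℂ)) ∈ SpecLQ Q := by
  exact statement19_general hQcont hQper (fun x => Matrix.ext (hQPT x))
    (exists_odd_rootMultiplicity_add_of_diam_ne_zero hodd₁ hodd₂ hodd₃ hd)
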